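/- Let ρ = e^{2πi/3} ∈ ℍ, let n ≥ 0, and let x_1, …, x_n ∈ (0,1) be pairwise distinct. Define f(τ) = η(τ)^{20} / ( E4(τ)² ∏_{j=1}^n (J(τ) − x_j)² ). Then f has a double pole at τ = ρ with vanishing residue; precisely, the limit as τ → ρ (τ ≠ ρ) of (d/dτ)[ (τ − ρ)² f(τ) ] equals 0. -/

import Mathlib

open Complex Filter Topology

noncomputable section

/-- The nome `q = e^{2πiτ}`. -/
def qq (τ : ℂ) : ℂ := Complex.exp (2 * Real.pi * Complex.I * τ)

/-- The Eisenstein series `E₄(τ) = 1 + 240 Σ_{n≥1} σ₃(n) qⁿ`. -/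
def E4 (τ : ℂ) : ℂ := 1 + 240 * ∑' n : ℕ, (∑ d ∈ (n + 1).divisors, (d : ℂ) ^ 3) * qq τ ^ (n + 1)

/-- The Eisenstein series `E₆(τ) = 1 − 504 Σ_{n≥1} σ₅(n) qⁿ`. -/
def E6 (τ : ℂ) : ℂ := 1 - 504 * ∑' n : ℕ, (∑ d ∈ (n + 1).divisors, (d : ℂ) ^ 5) * qq τ ^ (n + 1)

/-- The normalized elliptic modular function `J = E₄³ / (E₄³ − E₆²)`. -/
def J (τ : ℂ) : ℂ := E4 τ ^ 3 / (E4 τ ^ 3 - E6 τ ^ 2)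

/-- The Dedekind eta function `η(τ) = e^{πiτ/12} ∏_{n≥1} (1 − qⁿ)`. -/
def dedekindEta (τ : ℂ) : ℂ := Complex.exp (Real.pi * Complex.I * τ / 12) * ∏' n : ℕ, (1 - qq τ ^ (n + 1))

/-- The elliptic point `ρ = e^{2πi/3}`. -/
def rho : ℂ := Complex.exp (2 * Real.pi * Complex.I / 3)

open UpperHalfPlane hiding I J
open scoped MatrixGroups ModularForm Manifold

lemma dedekindEta_eq (z : ℂ) : dedekindEta z = ModularForm.eta z := by
  simp only [dedekindEta, ModularForm.eta, ModularForm.eta_q_eq_pow, qq, Function.Periodic.qParam]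
  congr 2
  push_cast
  ring

lemma bernoulli_six : bernoulli 6 = 1 / 42 := by
  have h5 : bernoulli' 5 = 0 := bernoulli'_eq_zero_of_odd (by decide) (by norm_num)
  rw [bernoulli_eq_bernoulli'_of_ne_one (by norm_num), bernoulli'_def]
  norm_num [Finset.sum_range_succ, Nat.choose, h5]

lemma E4_coe (z : ℍ) : E4 z = ModularForm.E₄ z := by
  rw [EisensteinSeries.q_expansion_bernoulli _ ⟨2, rfl⟩,
    bernoulli_eq_bernoulli'_of_ne_one (by norm_num), bernoulli'_four,
    tsum_pnat_eq_tsum_succ (f := fun n ↦ (ArithmeticFunction.sigma (4 - 1) n : ℂ) *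
      cexp (2 * Real.pi * Complex.I * z) ^ (n : ℤ))]
  simp only [E4, qq, ArithmeticFunction.sigma_apply]
  push_cast
  norm_num
  norm_cast

lemma E6_coe (z : ℍ) : E6 z = ModularForm.E₆ z := by
  rw [EisensteinSeries.q_expansion_bernoulli _ ⟨3, rfl⟩, bernoulli_six,
    tsum_pnat_eq_tsum_succ (f := fun n ↦ (ArithmeticFunction.sigma (6 - 1) n : ℂ) *
      cexp (2 * Real.pi * Complex.I * z) ^ (n : ℤ))]
  simp only [E6, qq, ArithmeticFunction.sigma_apply]
  push_cast
  norm_num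
  norm_cast

lemma E4_cube_sub_E6_sq {z : ℂ} (hz : 0 < z.im) :
    E4 z ^ 3 - E6 z ^ 2 = 1728 * dedekindEta z ^ 24 := by
  have h := ModularForm.discriminant_eq_E₄_cube_sub_E₆_sq ⟨z, hz⟩
  rw [← E4_coe, ← E6_coe, ModularForm.discriminant, ← dedekindEta_eq] at h
  linear_combination -1728 * h

lemma J_eq {z : ℂ} (hz : 0 < z.im) : J z = E4 z ^ 3 / (1728 * dedekindEta z ^ 24) := by
  rw [J, E4_cube_sub_E6_sq hz]

lemma dedekindEta_ne_zero {z : ℂ} (hz : 0 < z.im) : dedekindEta z ≠ 0 :=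
  dedekindEta_eq z ▸ ModularForm.eta_ne_zero hz

lemma differentiableAt_dedekindEta {z : ℂ} (hz : 0 < z.im) : DifferentiableAt ℂ dedekindEta z :=
  (funext dedekindEta_eq : dedekindEta = _) ▸
    ModularForm.differentiableAt_eta_of_mem_upperHalfPlaneSet hz

lemma E4_eventuallyEq (z : ℍ) : E4 =ᶠ[𝓝 (z : ℂ)] ModularForm.E₄ ∘ ofComplex := by
  filter_upwards [isOpen_upperHalfPlaneSet.mem_nhds z.im_pos] with w hw
  rw [Function.comp_apply, ofComplex_apply_of_im_pos hw, ← E4_coe]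

lemma differentiableAt_E4 {z : ℂ} (hz : 0 < z.im) : DifferentiableAt ℂ E4 z :=
  (UpperHalfPlane.mdifferentiableAt_iff.mp
    (ModularForm.E₄.holo' ⟨z, hz⟩)).congr_of_eventuallyEq (E4_eventuallyEq ⟨z, hz⟩)

lemma add_one_ne_zero_of_im_pos {z : ℂ} (hz : 0 < z.im) : z + 1 ≠ 0 :=
  fun h ↦ by simpa [hz.ne'] using congrArg Complex.im h

lemma im_neg_one_div_add_one_pos {z : ℂ} (hz : 0 < z.im) : 0 < (-1 / (z + 1)).im := by
  have := add_one_ne_zero_of_im_pos hz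
  rw [neg_div, one_div, Complex.neg_im, Complex.inv_im, neg_div, neg_neg]
  exact div_pos (by simpa using hz) (Complex.normSq_pos.mpr this)

lemma slashInvariant_neg_one_div_add_one {k : ℤ} {F : Type*} [FunLike F ℍ ℂ]
    [SlashInvariantFormClass F 𝒮ℒ k] (f : F) (z w : ℍ) (hw : (w : ℂ) = -1 / (z + 1)) :
    f w = (z + 1 : ℂ) ^ k * f z := by
  have h := SlashInvariantForm.slash_action_eqn' f (Γ := 𝒮ℒ)
    (γ := Matrix.SpecialLinearGroup.mapGL ℝ (ModularGroup.S * ModularGroup.T)) ⟨_, rfl⟩ z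
  have hsmul : (Matrix.SpecialLinearGroup.mapGL ℝ (ModularGroup.S * ModularGroup.T)) • z = w := by
    ext1
    rw [hw]
    change ((((ModularGroup.S * ModularGroup.T) • z : ℍ)) : ℂ) = _
    rw [mul_smul, modular_S_smul, modular_T_smul]
    simp [neg_div, add_comm]
    grind
  rw [hsmul] at h
  simpa [ModularGroup.coe_S, ModularGroup.coe_T, Matrix.mul_apply, Fin.sum_univ_two] using h

lemma E4_neg_one_div_add_one {z : ℂ} (hz : 0 < z.im) :
    E4 (-1 / (z + 1)) = (z + 1) ^ 4 * E4 z := by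
  have := slashInvariant_neg_one_div_add_one ModularForm.E₄ ⟨z, hz⟩
    ⟨_, im_neg_one_div_add_one_pos hz⟩ rfl
  rw [← E4_coe, ← E4_coe] at this
  exact_mod_cast this

lemma dedekindEta_pow_neg_one_div_add_one {z : ℂ} (hz : 0 < z.im) :
    dedekindEta (-1 / (z + 1)) ^ 24 = (z + 1) ^ 12 * dedekindEta z ^ 24 := by
  have := slashInvariant_neg_one_div_add_one CuspForm.discriminant ⟨z, hz⟩
    ⟨_, im_neg_one_div_add_one_pos hz⟩ rfl
  simp only [CuspForm.coe_discriminant, ModularForm.discriminant, ← dedekindEta_eq] at this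
  exact_mod_cast this

section Serre

open Derivative UpperHalfPlane.IsBoundedAtImInfty

lemma tendsto_atImInfty_cuspFunction {f : ℍ → ℂ} (hper : Function.Periodic (f ∘ ofComplex) (1 : ℝ))
    (hf : MDiff f) (hbdd : IsBoundedAtImInfty f) :
    Tendsto f atImInfty (𝓝 (cuspFunction 1 f 0)) :=
  ((analyticAt_cuspFunction_zero one_pos hper hf hbdd).continuousAt.tendsto.comp
    (qParam_tendsto_atImInfty one_pos)).congr fun τ ↦ eq_cuspFunction τ one_ne_zero hper

lemma periodic_E2 : Function.Periodic (EisensteinSeries.E2 ∘ ofComplex) (1 : ℝ) := by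
  intro w
  by_cases hw : 0 < w.im
  · have hw' : 0 < (w + (1 : ℝ)).im := by simpa using hw
    simp only [Function.comp_apply, ofComplex_apply_of_im_pos hw, ofComplex_apply_of_im_pos hw',
      EisensteinSeries.E2_eq_tsum_cexp]
    have : cexp (2 * Real.pi * Complex.I * (w + (1 : ℝ))) = cexp (2 * Real.pi * Complex.I * w) := by
      rw [Complex.ofReal_one, mul_add, mul_one, Complex.exp_add, Complex.exp_two_pi_mul_I, mul_one]
    simp only [this]
  · have hw' : ¬ 0 < (w + (1 : ℝ)).im := by simpa using hw
    simp only [Function.comp_apply, ofComplex_apply_of_im_nonpos (not_lt.mp hw),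
      ofComplex_apply_of_im_nonpos (not_lt.mp hw')]

lemma tendsto_E2_atImInfty : Tendsto EisensteinSeries.E2 atImInfty (𝓝 1) := by
  have han := analyticAt_cuspFunction_zero one_pos periodic_E2 E2_mdifferentiable
    EisensteinSeries.isBoundedAtImInfty_E2
  have hser := (hasFPowerSeriesOnBall_cuspFunction one_pos han fun τ ↦ by
    simpa only [Function.Periodic.qParam, ofReal_one, div_one] using
      EisensteinSeries.hasSum_qExpansion_E2 (z := τ)).coeff_zero 0
  have h := tendsto_atImInfty_cuspFunction periodic_E2 E2_mdifferentiable
    EisensteinSeries.isBoundedAtImInfty_E2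
  rw [← hser] at h
  simpa using h

lemma tendsto_E_atImInfty {k : ℕ} (hk : 3 ≤ k) (hk2 : Even k) :
    Tendsto (ModularForm.E hk) atImInfty (𝓝 1) := by
  have h := tendsto_atImInfty_cuspFunction
    (SlashInvariantFormClass.periodic_comp_ofComplex (ModularForm.E hk) one_mem_strictPeriods_SL)
    (ModularForm.E hk).holo' (ModularFormClass.bdd_at_infty _)
  have h0 := EisensteinSeries.E_qExpansion_coeff_zero hk hk2
  rw [qExpansion_coeff] at h0
  simp only [Nat.factorial_zero, Nat.cast_one, inv_one, one_mul, iteratedDeriv_zero] at h0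
  rwa [h0] at h

lemma tendsto_normalizedDeriv_atImInfty {f : ℍ → ℂ}
    (hper : Function.Periodic (f ∘ ofComplex) (1 : ℝ)) (hf : MDiff f)
    (hbdd : IsBoundedAtImInfty f) :
    Tendsto (normalizedDerivOfComplex f) atImInfty (𝓝 0) := by
  have hq : Tendsto (fun τ : ℍ ↦ Function.Periodic.qParam 1 τ) atImInfty (𝓝 0) :=
    qParam_tendsto_atImInfty one_pos
  have hlim : Tendsto (fun τ : ℍ ↦ Function.Periodic.qParam 1 τ *
      deriv (cuspFunction 1 f) (Function.Periodic.qParam 1 τ)) atImInfty (𝓝 0) := by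
    simpa using hq.mul ((analyticAt_cuspFunction_zero one_pos hper hf
      hbdd).deriv.continuousAt.tendsto.comp hq)
  refine hlim.congr fun τ ↦ ?_
  have hev : f ∘ ofComplex =ᶠ[𝓝 (τ : ℂ)] cuspFunction 1 f ∘ Function.Periodic.qParam 1 := by
    filter_upwards [isOpen_upperHalfPlaneSet.mem_nhds τ.im_pos] with w hw
    rw [Function.comp_apply, ofComplex_apply_of_im_pos hw]
    exact (eq_cuspFunction ⟨w, hw⟩ one_ne_zero hper).symm
  have hdq : HasDerivAt (Function.Periodic.qParam 1)
      (2 * Real.pi * Complex.I * Function.Periodic.qParam 1 τ) τ := by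
    have h : Function.Periodic.qParam 1 = fun z ↦ cexp (2 * Real.pi * Complex.I * z) := by
      ext z
      simp [Function.Periodic.qParam]
    rw [h]
    simpa [mul_comm] using ((hasDerivAt_id (τ : ℂ)).const_mul (2 * Real.pi * Complex.I)).cexp
  have hF := (differentiableAt_cuspFunction one_pos hper hf hbdd
    (Function.Periodic.norm_qParam_lt_one one_pos τ.im_pos)).hasDerivAt
  rw [normalizedDerivOfComplex, hev.deriv_eq, (hF.comp (τ : ℂ) hdq).deriv]
  have := Real.pi_ne_zero
  field_simp

lemma tendsto_serreDerivative_E₄ :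
    Tendsto (serreDerivative 4 ModularForm.E₄) atImInfty (𝓝 (-1 / 3)) := by
  have h := (tendsto_normalizedDeriv_atImInfty
    (SlashInvariantFormClass.periodic_comp_ofComplex ModularForm.E₄ one_mem_strictPeriods_SL)
    ModularForm.E₄.holo' (ModularFormClass.bdd_at_infty _)).sub
    ((tendsto_E2_atImInfty.const_mul (4 * 12⁻¹)).mul
      (tendsto_E_atImInfty (by norm_num : 3 ≤ 4) ⟨2, rfl⟩))
  convert! h using 2
  norm_num

lemma serreDerivative_E₄_slash (γ : SL(2, ℤ)) :
    serreDerivative 4 ModularForm.E₄ ∣[(6 : ℤ)] γ = serreDerivative 4 ModularForm.E₄ :=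
  serreDerivative_slash_invariant (k := 4) ModularForm.E₄.holo'
    (SlashInvariantForm.slash_action_eqn ModularForm.E₄ _ ⟨γ, rfl⟩)

/-- The Serre derivative of `E₄` as a modular form of weight `6`. -/
def serreDerivativeE₄ : ModularForm 𝒮ℒ 6 where
  toFun := serreDerivative 4 ModularForm.E₄
  slash_action_eq' A hA := by
    obtain ⟨A, rfl⟩ := hA
    exact serreDerivative_E₄_slash A
  holo' := serreDerivative_mdifferentiable 4 ModularForm.E₄.holo'
  bdd_at_cusps' hc := by
    rw [Subgroup.IsArithmetic.isCusp_iff_isCusp_SL2Z] at hc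
    rw [OnePoint.isBoundedAt_iff_forall_SL2Z hc]
    intro γ _
    rw [serreDerivative_E₄_slash]
    exact tendsto_serreDerivative_E₄.isBigO_one ℝ

lemma serreDerivative_E₄_eq (z : ℍ) :
    serreDerivative 4 ModularForm.E₄ z = -1 / 3 * ModularForm.E₆ z := by
  obtain ⟨c, hc⟩ : ∃ c : ℂ, c • ModularForm.E₆ = serreDerivativeE₄ :=
    (finrank_eq_one_iff_of_nonzero' ModularForm.E₆
      (EisensteinSeries.E_ne_zero _ ⟨3, rfl⟩)).mp
      (Module.rank_eq_one_iff_finrank_eq_one.mp ModularForm.levelOne_weight_six_rank_one) _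
  have hc' (z : ℍ) : c * ModularForm.E₆ z = serreDerivative 4 ModularForm.E₄ z :=
    congrArg (fun f : ModularForm 𝒮ℒ 6 ↦ f z) hc
  have hlim := (tendsto_E_atImInfty (by norm_num : 3 ≤ 6) ⟨3, rfl⟩).const_mul c
  have := tendsto_nhds_unique (hlim.congr hc') tendsto_serreDerivative_E₄
  rw [← hc', ← this, mul_one]

/-- The zeros of `E4` in the upper half-plane are simple. -/
lemma deriv_E4_ne_zero {z : ℂ} (hz : 0 < z.im) (h4 : E4 z = 0) : deriv E4 z ≠ 0 := by
  intro hd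
  have h := serreDerivative_E₄_eq ⟨z, hz⟩
  rw [serreDerivative_apply, normalizedDerivOfComplex, ← (E4_eventuallyEq ⟨z, hz⟩).deriv_eq,
    ← E4_coe, ← E6_coe, UpperHalfPlane.coe_mk, h4, hd] at h
  have h6 : E6 z = 0 := by linear_combination 3 * h
  have := E4_cube_sub_E6_sq hz
  simp [h4, h6, dedekindEta_ne_zero hz] at this

end Serre

lemma rho_eq : rho = -1 / 2 + (√3 / 2 : ℝ) * Complex.I := by
  rw [rho, show (2 * Real.pi * Complex.I / 3 : ℂ) = ((Real.pi - Real.pi / 3 : ℝ) : ℂ) * Complex.I by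
    push_cast; ring, Complex.exp_mul_I, ← Complex.ofReal_cos, ← Complex.ofReal_sin,
    Real.cos_pi_sub, Real.sin_pi_sub, Real.cos_pi_div_three, Real.sin_pi_div_three]
  push_cast
  ring

lemma rho_im_pos : 0 < rho.im := by
  simp [rho_eq]

lemma rho_sq : rho ^ 2 = -rho - 1 := by
  have h : ((√3 : ℝ) : ℂ) ^ 2 = 3 := by
    rw [← Complex.ofReal_pow, Real.sq_sqrt (by norm_num)]
    norm_num
  rw [rho_eq]
  push_cast
  linear_combination (1 / 4 : ℂ) * (((√3 : ℝ) : ℂ) ^ 2) * Complex.I_sq - (1 / 4 : ℂ) * h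

lemma neg_one_div_rho_add_one : -1 / (rho + 1) = rho := by
  rw [div_eq_iff (add_one_ne_zero_of_im_pos rho_im_pos)]
  linear_combination -rho_sq

lemma E4_rho : E4 rho = 0 := by
  have h := E4_neg_one_div_add_one rho_im_pos
  rw [neg_one_div_rho_add_one] at h
  have h2 : (rho + 2) * E4 rho = 0 := by
    linear_combination h + (rho ^ 2 + 3 * rho + 2) * E4 rho * rho_sq
  refine (mul_eq_zero.mp h2).resolve_left fun h0 ↦ ?_
  simpa [rho_im_pos.ne'] using congrArg Complex.im h0

lemma J_rho : J rho = 0 := by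
  simp [J, E4_rho]

lemma differentiableAt_J {z : ℂ} (hz : 0 < z.im) : DifferentiableAt ℂ J z := by
  have h : J =ᶠ[𝓝 z] fun w ↦ E4 w ^ 3 / (1728 * dedekindEta w ^ 24) := by
    filter_upwards [isOpen_upperHalfPlaneSet.mem_nhds hz] with w hw using J_eq hw
  refine DifferentiableAt.congr_of_eventuallyEq ?_ h
  exact ((differentiableAt_E4 hz).pow 3).div
    (((differentiableAt_dedekindEta hz).pow 24).const_mul _)
    (mul_ne_zero (by norm_num) (pow_ne_zero _ (dedekindEta_ne_zero hz)))

lemma J_neg_one_div_add_one {z : ℂ} (hz : 0 < z.im) : J (-1 / (z + 1)) = J z := by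
  rw [J_eq hz, J_eq (im_neg_one_div_add_one_pos hz), E4_neg_one_div_add_one hz,
    dedekindEta_pow_neg_one_div_add_one hz]
  have := add_one_ne_zero_of_im_pos hz
  have := dedekindEta_ne_zero hz
  field_simp

lemma differentiableOn_dslope_E4_rho :
    DifferentiableOn ℂ (dslope E4 rho) upperHalfPlaneSet :=
  (Complex.differentiableOn_dslope (isOpen_upperHalfPlaneSet.mem_nhds rho_im_pos)).mpr
    fun _ hz ↦ (differentiableAt_E4 hz).differentiableWithinAt

lemma dslope_E4_rho_neg_one_div_add_one {z : ℂ} (hz : 0 < z.im) :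
    dslope E4 rho (-1 / (z + 1)) = (z + 1) ^ 5 * (rho + 1) * dslope E4 rho z := by
  have hz1 := add_one_ne_zero_of_im_pos hz
  have hr1 := add_one_ne_zero_of_im_pos rho_im_pos
  have hsub : -1 / (z + 1) - rho = (z - rho) / ((z + 1) * (rho + 1)) := by
    nth_rewrite 1 [← neg_one_div_rho_add_one]
    field_simp
    ring
  rcases eq_or_ne z rho with rfl | hne
  · rw [neg_one_div_rho_add_one]
    have h6 : (rho + 1) ^ 5 * (rho + 1) = 1 := by
      linear_combination ((rho + 1) ^ 3 - 1) * (rho + 2) * rho_sq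
    rw [h6, one_mul]
  · have hne' : -1 / (z + 1) ≠ rho := by
      rw [← sub_ne_zero, hsub]
      exact div_ne_zero (sub_ne_zero.mpr hne) (mul_ne_zero hz1 hr1)
    rw [dslope_of_ne _ hne, dslope_of_ne _ hne', slope_def_field, slope_def_field, E4_rho, hsub,
      E4_neg_one_div_add_one hz]
    have := sub_ne_zero.mpr hne
    field_simp
    ring

/-- A function near a fixed point `p` of `γ` which is `γ`-invariant up to roots of unity and
does not vanish at `p` has a critical point there, provided `γ` has derivative `≠ 1` at `p`. -/
lemma deriv_eq_zero_of_pow_comp_eventuallyEq {G γ : ℂ → ℂ} {p γ' : ℂ} {m : ℕ} (hm : m ≠ 0)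
    (hG : DifferentiableAt ℂ G p) (hGp : G p ≠ 0) (hγ : HasDerivAt γ γ' p) (hp : γ p = p)
    (hγ' : γ' ≠ 1) (h : (fun z ↦ G (γ z) ^ m) =ᶠ[𝓝 p] fun z ↦ G z ^ m) : deriv G p = 0 := by
  have h1 := hG.hasDerivAt.pow m
  have h2 : HasDerivAt (fun z ↦ G z ^ m) (m * G p ^ (m - 1) * deriv G p) (γ p) := by
    rw [hp]; exact h1
  have h3 := (h2.comp p hγ).unique (h1.congr_of_eventuallyEq h)
  have h4 : (m * G p ^ (m - 1)) * deriv G p * (γ' - 1) = 0 := by linear_combination h3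
  simpa [hm, hGp, sub_ne_zero.mpr hγ'] using h4

/-- The function `(z - ρ)² · η²⁰ / (E₄² · ∏ⱼ (J - xⱼ)²)` with its singularity at `ρ` removed. -/
def regularPart {n : ℕ} (x : Fin n → ℝ) (z : ℂ) : ℂ :=
  dedekindEta z ^ 20 / (dslope E4 rho z ^ 2 * ∏ j, (J z - (x j : ℂ)) ^ 2)

lemma regularPart_pow_six_neg_one_div_add_one {n : ℕ} (x : Fin n → ℝ) {z : ℂ} (hz : 0 < z.im) :
    regularPart x (-1 / (z + 1)) ^ 6 = regularPart x z ^ 6 := by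
  have hpow (t e P : ℂ) : (t ^ 20 / (e ^ 2 * P)) ^ 6 = (t ^ 24) ^ 5 / (e ^ 12 * P ^ 6) := by
    rw [div_pow, mul_pow]
    ring
  have hr : (rho + 1) ^ 12 = 1 := by
    linear_combination ((rho + 1) ^ 6 + 1) * ((rho + 1) ^ 3 - 1) * (rho + 2) * rho_sq
  have hz1 : (z + 1) ^ 60 ≠ 0 := pow_ne_zero _ (add_one_ne_zero_of_im_pos hz)
  simp only [regularPart, hpow, J_neg_one_div_add_one hz, dedekindEta_pow_neg_one_div_add_one hz,
    dslope_E4_rho_neg_one_div_add_one hz]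
  rw [mul_pow _ (dslope E4 rho z), mul_pow _ (rho + 1), hr, mul_one, mul_pow, ← pow_mul (z + 1),
    ← pow_mul (z + 1), mul_assoc, mul_div_mul_left _ _ hz1]

/-- The residue of `η²⁰ / (E₄²·∏ⱼ(J−xⱼ)²)` at its double pole `τ = ρ` vanishes:
`lim_{τ→ρ, τ≠ρ} (d/dτ)[(τ−ρ)² f(τ)] = 0`. -/
theorem residue_at_rho_vanishes (n : ℕ) (x : Fin n → ℝ)
    (hx : ∀ j, x j ∈ Set.Ioo (0 : ℝ) 1) (hinj : Function.Injective x) :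
    Tendsto
      (fun τ : ℂ => deriv (fun z : ℂ =>
        (z - rho) ^ 2 *
          (dedekindEta z ^ 20 / (E4 z ^ 2 * ∏ j, (J z - (x j : ℂ)) ^ 2))) τ)
      (𝓝[≠] rho) (𝓝 0) := by
  have hJ (j) : J rho - (x j : ℂ) ≠ 0 := by
    rw [J_rho, zero_sub, neg_ne_zero, Complex.ofReal_ne_zero]
    exact (hx j).1.ne'
  have hden : dslope E4 rho rho ^ 2 * ∏ j, (J rho - (x j : ℂ)) ^ 2 ≠ 0 := by
    rw [dslope_same]
    exact mul_ne_zero (pow_ne_zero _ (deriv_E4_ne_zero rho_im_pos E4_rho))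
      (Finset.prod_ne_zero_iff.mpr fun j _ ↦ pow_ne_zero _ (hJ j))
  have hdiff {z : ℂ} (hz : 0 < z.im) : DifferentiableAt ℂ
      (fun w ↦ dslope E4 rho w ^ 2 * ∏ j, (J w - (x j : ℂ)) ^ 2) z :=
    ((differentiableOn_dslope_E4_rho.differentiableAt
      (isOpen_upperHalfPlaneSet.mem_nhds hz)).pow 2).mul
      (DifferentiableAt.fun_finsetProd fun j _ ↦ ((differentiableAt_J hz).sub_const _).pow 2)
  have hU : ∀ᶠ z in 𝓝 rho, 0 < z.im := isOpen_upperHalfPlaneSet.mem_nhds rho_im_pos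
  have hG : AnalyticAt ℂ (regularPart x) rho := by
    rw [Complex.analyticAt_iff_eventually_differentiableAt]
    filter_upwards [hU, (hdiff rho_im_pos).continuousAt.eventually_ne hden] with z hz hne
    exact ((differentiableAt_dedekindEta hz).pow 20).div (hdiff hz) hne
  have hGρ : regularPart x rho ≠ 0 :=
    div_ne_zero (pow_ne_zero _ (dedekindEta_ne_zero rho_im_pos)) hden
  have hr1 := add_one_ne_zero_of_im_pos rho_im_pos
  have hγ : HasDerivAt (fun z ↦ -1 / (z + 1)) (1 / (rho + 1) ^ 2) rho := by
    convert! (hasDerivAt_const rho (-1 : ℂ)).div ((hasDerivAt_id rho).add_const 1) hr1 using 1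
    simp
  have hγ' : 1 / (rho + 1) ^ 2 ≠ 1 := by
    intro h
    have h1 : (rho + 1) ^ 2 = 1 := by simpa using h
    have h0 : rho = 1 := by linear_combination h1 - rho_sq
    simpa [h0] using rho_im_pos
  have hderiv : deriv (regularPart x) rho = 0 :=
    deriv_eq_zero_of_pow_comp_eventuallyEq (m := 6) (by norm_num) hG.differentiableAt hGρ hγ
      neg_one_div_rho_add_one hγ' (hU.mono fun z hz ↦ regularPart_pow_six_neg_one_div_add_one x hz)
  rw [← hderiv]
  refine (hG.deriv.continuousAt.tendsto.mono_left nhdsWithin_le_nhds).congr' ?_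
  filter_upwards [self_mem_nhdsWithin] with τ hτ
  refine Filter.EventuallyEq.deriv_eq ?_
  filter_upwards [isOpen_ne.mem_nhds hτ] with z hz
  have hz0 := sub_ne_zero.mpr hz
  rw [regularPart, dslope_of_ne _ hz, slope_def_field, E4_rho, sub_zero, div_pow, ← mul_div_assoc,
    div_mul_eq_mul_div, div_div_eq_mul_div, mul_comm]
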